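/- arXiv:1803.03913 — 3 statements merged into one kernel-verified Lean document; each statement's English description precedes it below -/
import Mathlib

section
/- Let 𝓗 be a set of connected simple graphs and let c be a constant such that every connected 𝓗-free graph G satisfies γ(G) ≤ c. Then 𝓗 ≤ {K*_{c+1}, S*_{c+1}, P_{3c+1}}, i.e., each of the graphs K*_{c+1}, S*_{c+1} and P_{3c+1} contains some member of 𝓗 as an induced subgraph. -/
/-!
Each of the three target graphs is connected and has domination number at least `c + 1`, so by
hypothesis it cannot be `𝓗`-free, i.e. it contains a member of `𝓗` as an induced subgraph.

The lower bound comes from a packing argument (`lt_domNum`): `c + 1` vertices whose closed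
neighborhoods are pairwise disjoint need `c + 1` distinct dominators. In `K*_{c+1}` and `S*_{c+1}`
these are the pendant vertices; in the path on `3c + 1` vertices `0, …, 3c` they are the multiples
of `3`.
-/

open SimpleGraph Finset

/-- A set `U` dominates a set `Y` in the graph `G`:
every vertex of `Y` is in the closed neighborhood of some vertex of `U`. -/
def Dominates {V : Type} (G : SimpleGraph V) (U Y : Set V) : Prop :=
  ∀ y ∈ Y, ∃ u ∈ U, u = y ∨ G.Adj u y

/-- The domination number of a finite graph. -/
noncomputable def domNum {V : Type} [Fintype V] (G : SimpleGraph V) : ℕ :=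
  sInf {n | ∃ S : Set V, S.ncard = n ∧ Dominates G S Set.univ}

/-- The graph `K*_n`: a complete graph on `x₁,…,xₙ` (the `inl` vertices)
together with a pendant vertex `yᵢ` (the `inr` vertices) attached to each `xᵢ`. -/
def Kstar (n : ℕ) : SimpleGraph (Fin n ⊕ Fin n) :=
  SimpleGraph.fromRel (fun a b => match a, b with
    | Sum.inl _, Sum.inl _ => True
    | Sum.inl i, Sum.inr j => i = j
    | _, _ => False)

/-- The graph `S*_n`: a star with center `x` (= `none`), leaves `yᵢ` (= `some (inl i)`),
with every edge subdivided by `zᵢ` (= `some (inr i)`): edges `x yᵢ` and `yᵢ zᵢ`. -/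
def Sstar (n : ℕ) : SimpleGraph (Option (Fin n ⊕ Fin n)) :=
  SimpleGraph.fromRel (fun a b => match a, b with
    | none, some (Sum.inl _) => True
    | some (Sum.inl i), some (Sum.inr j) => i = j
    | _, _ => False)

/-- `N^i_G(a)`: the set of vertices at distance exactly `i` from `a` in `G`. -/
def sphere {V : Type} (G : SimpleGraph V) (a : V) (i : ℕ) : Set V :=
  {v | G.Reachable a v ∧ G.dist a v = i}

/-- An independent set of vertices. -/
def Indep {V : Type} (G : SimpleGraph V) (X : Set V) : Prop :=
  ∀ x ∈ X, ∀ y ∈ X, x ≠ y → ¬ G.Adj x y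

/-- `N` vertices suffice to force a clique of size `s` or an independent set of size `t`. -/
def RamseyProp (N s t : ℕ) : Prop :=
  ∀ G : SimpleGraph (Fin N),
    (∃ A : Finset (Fin N), G.IsNClique s A) ∨ (∃ B : Finset (Fin N), Gᶜ.IsNClique t B)

/-- The Ramsey number `R(s,t)`. -/
noncomputable def ramsey (s t : ℕ) : ℕ := sInf {N | RamseyProp N s t}

/-- The function `g_{k,ℓ}` with `g(1) = 1` and `g(i) = R(k, (ℓ-1)g(i-1)+1) - 1` for `i ≥ 2`. -/
noncomputable def gfun (k l : ℕ) : ℕ → ℕ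
  | 0 => 1
  | 1 => 1
  | (i + 2) => ramsey k ((l - 1) * gfun k l (i + 1) + 1) - 1

/-- The function `f_{k,ℓ}(i) = R(k,ℓ) ⬝ g_{k,ℓ}(i)`. -/
noncomputable def ffun (k l i : ℕ) : ℕ := ramsey k l * gfun k l i

/-- A finite graph, encoded with vertex set `Fin n`. -/
abbrev FinGraph := Σ n : ℕ, SimpleGraph (Fin n)

/-- `G` is `𝓗`-free: no member of `𝓗` is an induced subgraph of `G`. -/
def HFree (𝓗 : Set FinGraph) {V : Type} (G : SimpleGraph V) : Prop :=
  ∀ H ∈ 𝓗, IsEmpty (H.2 ↪g G)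

/-- Packing lower bound. The labelling `g` assigns to every vertex in the closed neighborhood of
`f i` the label `i`, which witnesses that these neighborhoods are pairwise disjoint. -/
theorem lt_domNum {V : Type} [Fintype V] (G : SimpleGraph V) (c : ℕ)
    (f : Fin (c + 1) → V) (g : V → ℕ)
    (h : ∀ u i, u = f i ∨ G.Adj u (f i) → g u = i) : c < domNum G := by
  have hne : {n | ∃ S : Set V, S.ncard = n ∧ Dominates G S Set.univ}.Nonempty :=
    ⟨_, Set.univ, rfl, fun y _ => ⟨y, Set.mem_univ y, Or.inl rfl⟩⟩
  obtain ⟨S, hS, hdom⟩ := Nat.sInf_mem hne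
  choose d hdS hd using fun i => hdom (f i) (Set.mem_univ _)
  have hinj : Function.Injective d := by
    intro i j hij
    have hi := h _ _ (hd i)
    have hj := h _ _ (hd j)
    rw [hij] at hi
    exact Fin.ext (hi.symm.trans hj)
  have hcard : (Set.range d).ncard = c + 1 := by
    rw [← Set.image_univ, Set.ncard_image_of_injective _ hinj, Set.ncard_univ, Nat.card_fin]
  have hle : (Set.range d).ncard ≤ S.ncard :=
    Set.ncard_le_ncard (Set.range_subset_iff.2 hdS) S.toFinite
  change c < sInf _
  omega

theorem exists_embedding_of_lt_domNum {𝓗 : Set FinGraph} {c : ℕ}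
    (hc : ∀ (V : Type) [Fintype V], ∀ G : SimpleGraph V,
      G.Connected → HFree 𝓗 G → domNum G ≤ c)
    {V : Type} [Fintype V] {G : SimpleGraph V} (hG : G.Connected) (hlt : c < domNum G) :
    ∃ H ∈ 𝓗, Nonempty (H.2 ↪g G) := by
  by_contra! hfree
  exact absurd (hc V G hG hfree) (not_le.2 hlt)

theorem Kstar_connected (n : ℕ) : (Kstar (n + 1)).Connected := by
  rw [connected_iff_exists_forall_reachable]
  have hx : ∀ i, (Kstar (n + 1)).Reachable (Sum.inl 0) (Sum.inl i) := by
    intro i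
    by_cases hi : (0 : Fin (n + 1)) = i
    · rw [hi]
    · exact Adj.reachable (by simp [Kstar, hi])
  refine ⟨Sum.inl 0, ?_⟩
  rintro (i | i)
  · exact hx i
  · exact (hx i).trans (Adj.reachable (by simp [Kstar]))

theorem Sstar_connected (n : ℕ) : (Sstar n).Connected := by
  rw [connected_iff_exists_forall_reachable]
  have hy : ∀ i, (Sstar n).Reachable none (some (Sum.inl i)) :=
    fun i => Adj.reachable (by simp [Sstar])
  refine ⟨none, ?_⟩
  rintro (_ | i | i)
  · exact Reachable.refl _
  · exact hy i
  · exact (hy i).trans (Adj.reachable (by simp [Sstar]))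

theorem lt_domNum_Kstar (c : ℕ) : c < domNum (Kstar (c + 1)) := by
  refine lt_domNum _ c Sum.inr (Sum.elim Fin.val Fin.val) ?_
  rintro (j | j) i h
  · simpa [Kstar, Fin.ext_iff] using h
  · simpa [Kstar, Fin.ext_iff] using h

theorem lt_domNum_Sstar (c : ℕ) : c < domNum (Sstar (c + 1)) := by
  -- The center is adjacent to no pendant vertex, so its label is irrelevant.
  refine lt_domNum _ c (fun i => some (Sum.inr i))
    (fun u => u.elim 0 (Sum.elim Fin.val Fin.val)) ?_
  rintro (_ | j | j) i h
  · simp [Sstar] at h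
  · simpa [Sstar, Fin.ext_iff] using h
  · simpa [Sstar, Fin.ext_iff] using h

theorem lt_domNum_pathGraph (c : ℕ) : c < domNum (pathGraph (3 * c + 1)) := by
  -- The vertices `3i - 1`, `3i`, `3i + 1` are exactly those `u` with `(u + 1) / 3 = i`.
  refine lt_domNum _ c (fun i => ⟨3 * i, by omega⟩) (fun u => (u.val + 1) / 3) ?_
  intro u i h
  simp only [pathGraph_adj, Fin.ext_iff] at h
  omega

/-- The "only if" part of Theorem 1: if the domination number of connected `𝓗`-free
graphs is bounded by `c`, then `𝓗 ≤ {K*_{c+1}, S*_{c+1}, P_{3c+1}}`. -/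
theorem le_of_domNum_bounded (𝓗 : Set FinGraph) (hconn : ∀ H ∈ 𝓗, H.2.Connected)
    (c : ℕ)
    (hc : ∀ (V : Type) [Fintype V], ∀ G : SimpleGraph V,
      G.Connected → HFree 𝓗 G → domNum G ≤ c) :
    (∃ H ∈ 𝓗, Nonempty (H.2 ↪g Kstar (c + 1))) ∧
    (∃ H ∈ 𝓗, Nonempty (H.2 ↪g Sstar (c + 1))) ∧
    (∃ H ∈ 𝓗, Nonempty (H.2 ↪g pathGraph (3 * c + 1))) := by
  exact ⟨exists_embedding_of_lt_domNum hc (Kstar_connected c) (lt_domNum_Kstar c),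
    exists_embedding_of_lt_domNum hc (Sstar_connected (c + 1)) (lt_domNum_Sstar c),
    exists_embedding_of_lt_domNum hc (pathGraph_connected (3 * c)) (lt_domNum_pathGraph c)⟩
end

section
/- Let k, ℓ and m be positive integers and let 𝓗 be a set of connected simple graphs with 𝓗 ≤ {K*_k, S*_ℓ, P_m}. Then there exists a constant c (depending only on k, ℓ and m) such that every connected 𝓗-free graph G satisfies γ(G) ≤ c. -/
/-!
Fix a root `a`. A shortest path from `a` is induced, so a graph without an induced `P_m` has no
vertex at distance `m` or more from `a`; it therefore suffices to dominate each level
`{v | dist a v = i}` by boundedly many vertices.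

*Independent sets.* An independent set `Y` in level `i + 1` is dominated by at most `indepBound i`
vertices of level `i`. To see this, take a minimal subset `W` of level `i` dominating `Y`; each
`w ∈ W` has a private neighbour in `Y`. If `W` is large, Ramsey's theorem gives either a clique of
size `k` in `W`, which with its private neighbours induces `K*_k`, or a large independent set
`W' ⊆ W`. By induction `W'` is dominated by few vertices of level `i - 1`, so one of these is
adjacent to `ℓ` vertices of `W'` and together with their private neighbours they induce `S*_ℓ`.

*Whole levels.* Let `X` be a maximal independent subset of level `i + 1`, dominated by a bounded
set `W` in level `i`. For `w ∈ W`, the vertices of the level that are not adjacent to `w` but are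
adjacent to `N(w) ∩ X` can be dominated by a minimal `Z ⊆ N(w) ∩ X`. If `Z` is large, apply Ramsey
to the private neighbours: an independent set of `ℓ` of them induces `S*_ℓ` with centre `w`, and a
clique of `k` of them induces `K*_k`, in which the pendant vertices are the elements of `Z`.
-/

open SimpleGraph Finset

section

open Classical

/-! ### Ramsey's theorem and minimal dominating sets -/

/-- Ramsey's theorem for two colours, with the bound `2 ^ (s + t)`, for an arbitrary symmetric
relation in the role of adjacency. -/
lemma exists_ramsey {V : Type} (r : V → V → Prop) (hr : ∀ x y, r x y → r y x) :
    ∀ (n s t : ℕ), s + t = n → ∀ A : Finset V, 2 ^ (s + t) ≤ A.card →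
      (∃ B ⊆ A, B.card = s ∧ ∀ x ∈ B, ∀ y ∈ B, x ≠ y → r x y) ∨
      (∃ B ⊆ A, B.card = t ∧ ∀ x ∈ B, ∀ y ∈ B, x ≠ y → ¬ r x y) := by
  intro n
  induction n with
  | zero =>
    intro s t h A _
    exact Or.inl ⟨∅, by simp, by simp; omega, by simp⟩
  | succ n ih =>
    intro s t h A hA
    rcases s with _ | s
    · exact Or.inl ⟨∅, by simp, by simp, by simp⟩
    rcases t with _ | t
    · exact Or.inr ⟨∅, by simp, by simp, by simp⟩
    have hpos : 0 < A.card := lt_of_lt_of_le (by positivity) hA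
    obtain ⟨v, hv⟩ := Finset.card_pos.mp hpos
    have hsum := Finset.card_filter_add_card_filter_not (s := A.erase v) (fun x => r v x)
    have hce := Finset.card_erase_of_mem hv
    have hp : 2 ^ (s + 1 + (t + 1)) = 2 * 2 ^ (s + t + 1) := by ring
    by_cases hc : 2 ^ (s + t + 1) ≤ ((A.erase v).filter (fun x => r v x)).card
    · rcases ih s (t + 1) (by omega) _ (by simpa [add_assoc] using hc) with
        ⟨B, hB, hcard, hcl⟩ | ⟨B, hB, hcard, hcl⟩
      · have hvB : v ∉ B := fun h => by simpa using hB h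
        refine Or.inl ⟨insert v B, ?_, by rw [Finset.card_insert_of_notMem hvB, hcard], ?_⟩
        · intro x hx
          rcases Finset.mem_insert.mp hx with rfl | hx
          · exact hv
          · exact Finset.mem_of_mem_erase (Finset.mem_filter.mp (hB hx)).1
        · intro x hx y hy hxy
          rcases Finset.mem_insert.mp hx with rfl | hx' <;>
            rcases Finset.mem_insert.mp hy with rfl | hy'
          · exact absurd rfl hxy
          · exact (Finset.mem_filter.mp (hB hy')).2
          · exact hr _ _ (Finset.mem_filter.mp (hB hx')).2
          · exact hcl x hx' y hy' hxy
      · exact Or.inr ⟨B, fun x hx => Finset.mem_of_mem_erase (Finset.mem_filter.mp (hB hx)).1,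
          hcard, hcl⟩
    · have hc' : 2 ^ (s + t + 1) ≤ ((A.erase v).filter (fun x => ¬ r v x)).card := by omega
      rcases ih (s + 1) t (by omega) _
        (by rw [show s + 1 + t = s + t + 1 by ring]; exact hc') with
        ⟨B, hB, hcard, hcl⟩ | ⟨B, hB, hcard, hcl⟩
      · exact Or.inl ⟨B, fun x hx => Finset.mem_of_mem_erase (Finset.mem_filter.mp (hB hx)).1,
          hcard, hcl⟩
      · have hvB : v ∉ B := fun h => by simpa using hB h
        refine Or.inr ⟨insert v B, ?_, by rw [Finset.card_insert_of_notMem hvB, hcard], ?_⟩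
        · intro x hx
          rcases Finset.mem_insert.mp hx with rfl | hx
          · exact hv
          · exact Finset.mem_of_mem_erase (Finset.mem_filter.mp (hB hx)).1
        · intro x hx y hy hxy
          rcases Finset.mem_insert.mp hx with rfl | hx' <;>
            rcases Finset.mem_insert.mp hy with rfl | hy'
          · exact absurd rfl hxy
          · exact (Finset.mem_filter.mp (hB hy')).2
          · exact fun h => (Finset.mem_filter.mp (hB hx')).2 (hr _ _ h)
          · exact hcl x hx' y hy' hxy

/-- A dominating set contains a minimal one, each of whose members `w` has a private
neighbour `p w`. -/
lemma exists_private {V : Type} (G : SimpleGraph V) (Y W₀ : Finset V)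
    (h : ∀ y ∈ Y, ∃ w ∈ W₀, G.Adj w y) :
    ∃ W ⊆ W₀, (∀ y ∈ Y, ∃ w ∈ W, G.Adj w y) ∧
      ∃ p : V → V, ∀ w ∈ W, p w ∈ Y ∧ ∀ w' ∈ W, G.Adj w' (p w) ↔ w' = w := by
  obtain ⟨W, hW, hmin⟩ := Finset.exists_min_image
    (W₀.powerset.filter fun W => ∀ y ∈ Y, ∃ w ∈ W, G.Adj w y) Finset.card
    ⟨W₀, by simpa using h⟩
  simp only [Finset.mem_filter, Finset.mem_powerset] at hW hmin
  refine ⟨W, hW.1, hW.2, ?_⟩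
  have : ∀ w : V, ∃ y, w ∈ W → y ∈ Y ∧ ∀ w' ∈ W, G.Adj w' y ↔ w' = w := by
    intro w
    by_cases hw : w ∈ W
    · by_contra! hcon
      have := hmin (W.erase w) ⟨(Finset.erase_subset _ _).trans hW.1, ?_⟩
      · have := Finset.card_erase_lt_of_mem hw
        omega
      · intro y hy
        obtain ⟨w₁, hw₁, hadj₁⟩ := hW.2 y hy
        obtain ⟨-, h2⟩ := hcon y
        obtain ⟨w', hw', h3⟩ := h2 hy
        by_cases hww : w₁ = w
        · subst hww
          rcases h3 with ⟨h3, h4⟩ | ⟨h3, h4⟩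
          · exact ⟨w', Finset.mem_erase.mpr ⟨h4, hw'⟩, h3⟩
          · subst h4
            exact absurd hadj₁ h3
        · exact ⟨w₁, Finset.mem_erase.mpr ⟨hww, hw₁⟩, hadj₁⟩
    · exact ⟨w, fun h => absurd h hw⟩
  choose p hp using this
  exact ⟨p, hp⟩

/-! ### Recognising induced `K*_k` and `S*_l` -/

/-- The sets `f(A)` and `p(A)` induce `K*_k`: `f` gives the clique and `p` its pendant
vertices. Disjointness and injectivity follow from the adjacencies. -/
lemma nonempty_kstar {V : Type} (G : SimpleGraph V) {k : ℕ} (A : Finset V) (hA : A.card = k)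
    (f p : V → V)
    (hf : ∀ x ∈ A, ∀ y ∈ A, x ≠ y → G.Adj (f x) (f y))
    (hfp : ∀ x ∈ A, ∀ y ∈ A, G.Adj (f x) (p y) ↔ x = y)
    (hp : ∀ x ∈ A, ∀ y ∈ A, ¬ G.Adj (p x) (p y)) :
    Nonempty (Kstar k ↪g G) := by
  let e : Fin k ≃ A := (A.equivFinOfCardEq hA).symm
  have hne : ∀ x ∈ A, ∀ y ∈ A, f x ≠ p y := by
    intro x hx y hy h
    exact hp y hy x hx (h ▸ (hfp x hx x hx).mpr rfl)
  have hei : ∀ i j, ((e i : V) = e j ↔ i = j) := fun i j => by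
    rw [Subtype.coe_inj, e.injective.eq_iff]
  refine ⟨⟨⟨Sum.elim (fun i => f (e i)) (fun i => p (e i)), ?_⟩, ?_⟩⟩
  · rintro (i | i) (j | j) h <;> simp only [Sum.elim_inl, Sum.elim_inr] at h
    · by_contra hij
      have := hf _ (e i).2 _ (e j).2 (fun h' => hij (by rw [(hei i j).mp h']))
      rw [h] at this
      exact this.ne rfl
    · exact absurd h (hne _ (e i).2 _ (e j).2)
    · exact absurd h.symm (hne _ (e j).2 _ (e i).2)
    · have := (hfp _ (e i).2 _ (e i).2).mpr rfl
      rw [h, hfp _ (e i).2 _ (e j).2, hei] at this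
      rw [this]
  · suffices H : ∀ u v, G.Adj (Sum.elim (fun i => f (e i)) (fun i => p (e i)) u)
        (Sum.elim (fun i => f (e i)) (fun i => p (e i)) v) ↔ (Kstar k).Adj u v from
      fun {u v} => H u v
    rintro (i | i) (j | j)
    · simp only [Sum.elim_inl, Kstar, SimpleGraph.fromRel_adj]
      constructor
      · intro h
        refine ⟨fun h' => ?_, Or.inl trivial⟩
        rw [Sum.inl.inj h'] at h
        exact h.ne rfl
      · rintro ⟨h, -⟩
        exact hf _ (e i).2 _ (e j).2 (fun h' => h (by rw [(hei i j).mp h']))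
    · simp [Kstar, SimpleGraph.fromRel_adj, hfp _ (e i).2 _ (e j).2, hei]
    · rw [SimpleGraph.adj_comm, SimpleGraph.adj_comm (Kstar k)]
      simp [Kstar, SimpleGraph.fromRel_adj, hfp _ (e j).2 _ (e i).2, hei]
    · simp [Kstar, SimpleGraph.fromRel_adj, hp _ (e i).2 _ (e j).2]

/-- The vertex `x`, the set `A` and `p(A)` induce `S*_l` with centre `x`. The assumption
`x ≠ p y` is needed for `l = 1`, where the adjacencies do not imply it. -/
lemma nonempty_sstar {V : Type} (G : SimpleGraph V) {l : ℕ} (A : Finset V) (hA : A.card = l)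
    (x : V) (p : V → V)
    (hx : ∀ y ∈ A, G.Adj x y) (hxp : ∀ y ∈ A, ¬ G.Adj x (p y)) (hxne : ∀ y ∈ A, x ≠ p y)
    (hf : ∀ y ∈ A, ∀ z ∈ A, ¬ G.Adj y z)
    (hfp : ∀ y ∈ A, ∀ z ∈ A, G.Adj y (p z) ↔ y = z)
    (hp : ∀ y ∈ A, ∀ z ∈ A, ¬ G.Adj (p y) (p z)) :
    Nonempty (Sstar l ↪g G) := by
  let e : Fin l ≃ A := (A.equivFinOfCardEq hA).symm
  have hei : ∀ i j, ((e i : V) = e j ↔ i = j) := fun i j => by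
    rw [Subtype.coe_inj, e.injective.eq_iff]
  have hne : ∀ y ∈ A, ∀ z ∈ A, y ≠ p z := by
    intro y hy z hz h
    exact hxp z hz (h ▸ hx y hy)
  refine ⟨⟨⟨fun o => o.elim x (Sum.elim (fun i => (e i : V)) (fun i => p (e i))), ?_⟩, ?_⟩⟩
  · rintro (_ | i | i) (_ | j | j) h <;> simp only [Option.elim, Sum.elim_inl, Sum.elim_inr] at h
    · rfl
    · exact absurd h (hx _ (e j).2).ne
    · exact absurd h (hxne _ (e j).2)
    · exact absurd h.symm (hx _ (e i).2).ne
    · rw [(hei i j).mp h]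
    · exact absurd h (hne _ (e i).2 _ (e j).2)
    · exact absurd h.symm (hxne _ (e i).2)
    · exact absurd h.symm (hne _ (e j).2 _ (e i).2)
    · have := (hfp _ (e i).2 _ (e i).2).mpr rfl
      rw [h, hfp _ (e i).2 _ (e j).2, hei] at this
      rw [this]
  · suffices H : ∀ u v : Option (Fin l ⊕ Fin l),
        G.Adj (u.elim x (Sum.elim (fun i => (e i : V)) (fun i => p (e i))))
        (v.elim x (Sum.elim (fun i => (e i : V)) (fun i => p (e i)))) ↔ (Sstar l).Adj u v from
      fun {u v} => H u v
    rintro (_ | i | i) (_ | j | j)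
    · simp
    · simp [Sstar, SimpleGraph.fromRel_adj, hx _ (e j).2]
    · simp [Sstar, SimpleGraph.fromRel_adj, hxp _ (e j).2]
    · simp [Sstar, SimpleGraph.fromRel_adj, (hx _ (e i).2).symm]
    · simp [Sstar, SimpleGraph.fromRel_adj, hf _ (e i).2 _ (e j).2]
    · simp [Sstar, SimpleGraph.fromRel_adj, hfp _ (e i).2 _ (e j).2, hei]
    · rw [SimpleGraph.adj_comm]
      simp [Sstar, SimpleGraph.fromRel_adj, hxp _ (e i).2]
    · rw [SimpleGraph.adj_comm, SimpleGraph.adj_comm (Sstar l)]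
      simp [Sstar, SimpleGraph.fromRel_adj, hfp _ (e j).2 _ (e i).2, hei]
    · simp [Sstar, SimpleGraph.fromRel_adj, hp _ (e i).2 _ (e j).2]

/-! ### Distance levels and geodesics -/

lemma exists_pred {V : Type} {G : SimpleGraph V} (hG : G.Connected) {a v : V} {i : ℕ}
    (h : G.dist a v = i + 1) : ∃ w, G.dist a w = i ∧ G.Adj w v := by
  obtain ⟨q, hq⟩ := hG.exists_walk_length_eq_dist v a
  rw [SimpleGraph.dist_comm, h] at hq
  cases q with
  | nil => simp at hq
  | @cons _ w _ hadj q =>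
    simp only [SimpleGraph.Walk.length_cons, Nat.add_right_cancel_iff] at hq
    refine ⟨w, ?_, hadj.symm⟩
    have h1 := SimpleGraph.dist_le q
    have h2 := hG.dist_triangle (u := a) (v := w) (w := v)
    rw [SimpleGraph.dist_eq_one_iff_adj.mpr hadj.symm] at h2
    rw [SimpleGraph.dist_comm] at h1
    omega

lemma dist_le_of_adj {V : Type} {G : SimpleGraph V} (hG : G.Connected) {a u v : V}
    (h : G.Adj u v) : G.dist a v ≤ G.dist a u + 1 := by
  have h2 := hG.dist_triangle (u := a) (v := u) (w := v)
  rwa [SimpleGraph.dist_eq_one_iff_adj.mpr h] at h2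

lemma exists_geodesic {V : Type} {G : SimpleGraph V} (hG : G.Connected) (a : V) :
    ∀ (n : ℕ) (v : V), G.dist a v = n → ∃ f : ℕ → V,
      (∀ i ≤ n, G.dist a (f i) = i) ∧ ∀ i < n, G.Adj (f i) (f (i + 1)) := by
  intro n
  suffices H : ∀ v : V, G.dist a v = n → ∃ f : ℕ → V, f n = v ∧
      (∀ i ≤ n, G.dist a (f i) = i) ∧ ∀ i < n, G.Adj (f i) (f (i + 1)) from
    fun v hv => (H v hv).imp fun f hf => hf.2
  induction n with
  | zero =>
    intro v hv
    exact ⟨fun _ => v, rfl, fun i hi => by rw [hv]; omega, fun i hi => by omega⟩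
  | succ n ih =>
    intro v hv
    obtain ⟨w, hw, hadj⟩ := exists_pred hG hv
    obtain ⟨f, hfn, hfd, hfa⟩ := ih w hw
    refine ⟨fun i => if i ≤ n then f i else v, by simp, ?_, ?_⟩
    · intro i hi
      by_cases h : i ≤ n
      · simp [h, hfd i h]
      · simp only [h, if_false, hv]; omega
    · intro i hi
      by_cases h : i + 1 ≤ n
      · simp [h, show i ≤ n by omega, hfa i (by omega)]
      · obtain rfl : i = n := by omega
        simp [hfn, hadj]

/-- Geodesics are induced paths, so a graph with no induced `P_m` has all distances below `m`. -/
lemma dist_lt_of_path_free {V : Type} {G : SimpleGraph V} (hG : G.Connected) {m : ℕ}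
    (hP : IsEmpty (pathGraph m ↪g G)) (a v : V) : G.dist a v < m := by
  by_contra! hm
  obtain ⟨f, hd, ha⟩ := exists_geodesic hG a _ v rfl
  refine hP.false ⟨⟨fun i : Fin m => f i, ?_⟩, ?_⟩
  · intro i j hij
    have h1 := hd i (by omega)
    have h2 := hd j (by omega)
    simp only at hij
    rw [hij] at h1
    exact Fin.ext (by omega)
  · intro i j
    change G.Adj (f i) (f j) ↔ _
    rw [SimpleGraph.pathGraph_adj]
    constructor
    · intro h
      have h1 := hd i (by omega)
      have h2 := hd j (by omega)
      have h3 := dist_le_of_adj hG (a := a) h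
      have h4 := dist_le_of_adj hG (a := a) h.symm
      have h5 : (i : ℕ) ≠ j := fun h' => by rw [h'] at h; exact h.ne rfl
      omega
    · rintro (h | h)
      · rw [← h]; exact ha _ (by omega)
      · rw [← h]; exact (ha _ (by omega)).symm

/-! ### Dominating the levels -/

/-- Bound for the number of vertices of level `i` needed to dominate an independent subset of
level `i + 1`. -/
def indepBound (k l : ℕ) : ℕ → ℕ
  | 0 => 1
  | i + 1 => 2 ^ (k + (indepBound k l i * l + 1))

lemma exists_dominating_indep {V : Type} [Fintype V] {G : SimpleGraph V} (hG : G.Connected)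
    {k l : ℕ} (hK : IsEmpty (Kstar k ↪g G)) (hS : IsEmpty (Sstar l ↪g G)) (a : V) :
    ∀ (i : ℕ) (Y : Finset V), (∀ y ∈ Y, G.dist a y = i + 1) →
      (∀ y ∈ Y, ∀ z ∈ Y, ¬ G.Adj y z) →
      ∃ W : Finset V, W.card ≤ indepBound k l i ∧ (∀ w ∈ W, G.dist a w = i) ∧
        ∀ y ∈ Y, ∃ w ∈ W, G.Adj w y := by
  intro i
  induction i with
  | zero =>
    intro Y hY _
    refine ⟨{a}, by simp [indepBound], by simp, fun y hy => ⟨a, by simp, ?_⟩⟩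
    exact SimpleGraph.dist_eq_one_iff_adj.mp (hY y hy)
  | succ i ih =>
    intro Y hY hind
    obtain ⟨W, hW, hdom, p, hp⟩ := exists_private G Y
      (Finset.univ.filter fun w => G.dist a w = i + 1) (fun y hy => by
        obtain ⟨w, hw, hadj⟩ := exists_pred hG (hY y hy)
        exact ⟨w, by simp [hw], hadj⟩)
    have hWd : ∀ w ∈ W, G.dist a w = i + 1 := fun w hw => by simpa using hW hw
    refine ⟨W, ?_, hWd, hdom⟩
    by_contra! hlarge
    rcases exists_ramsey G.Adj (fun _ _ h => h.symm) _ k (indepBound k l i * l + 1) rfl W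
      hlarge.le with ⟨B, hB, hcard, hcl⟩ | ⟨B, hB, hcard, hcl⟩
    · exact not_isEmpty_iff.mpr (nonempty_kstar G B hcard id p hcl
        (fun x hx y hy => (hp y (hB hy)).2 x (hB hx))
        (fun x hx y hy => hind _ (hp x (hB hx)).1 _ (hp y (hB hy)).1)) hK
    · have hcl' : ∀ x ∈ B, ∀ y ∈ B, ¬ G.Adj x y := fun x hx y hy h => hcl x hx y hy h.ne h
      obtain ⟨U, hUcard, hUd, hUdom⟩ := ih B (fun b hb => hWd b (hB hb)) hcl'
      choose! u hu hadj using hUdom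
      obtain ⟨c, hc, hfib⟩ := Finset.exists_lt_card_fiber_of_mul_lt_card_of_maps_to
        (s := B) (t := U) (f := u) (n := l) hu
        (lt_of_le_of_lt (Nat.mul_le_mul_right l hUcard) (by omega))
      obtain ⟨C, hC, hCcard⟩ := Finset.exists_subset_card_eq hfib.le
      have hCB : ∀ x ∈ C, x ∈ B := fun x hx => (Finset.mem_filter.mp (hC hx)).1
      -- The centre lies two levels above the private neighbours.
      have hdc := hUd c hc
      have hdp : ∀ y ∈ C, G.dist a (p y) = i + 1 + 1 := fun y hy => hY _ (hp y (hB (hCB y hy))).1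
      refine not_isEmpty_iff.mpr (nonempty_sstar G C hCcard c p ?_ ?_ ?_
        (fun x hx y hy => hcl' x (hCB x hx) y (hCB y hy))
        (fun x hx y hy => (hp y (hB (hCB y hy))).2 x (hB (hCB x hx)))
        (fun x hx y hy => hind _ (hp x (hB (hCB x hx))).1 _ (hp y (hB (hCB y hy))).1)) hS
      · intro y hy
        have := hadj y (hCB y hy)
        rwa [(Finset.mem_filter.mp (hC hy)).2] at this
      · intro y hy h
        have h1 := dist_le_of_adj hG (a := a) h
        have h2 := hdp y hy
        omega
      · intro y hy h
        have h2 := hdp y hy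
        rw [← h] at h2
        omega

/-- The neighbours of `X` in `L` (with `X ⊆ N(w)` independent) that `w` itself misses are dominated
by boundedly many elements of `X`. -/
lemma exists_dominating_local {V : Type} {G : SimpleGraph V}
    {k l : ℕ} (hK : IsEmpty (Kstar k ↪g G)) (hS : IsEmpty (Sstar l ↪g G)) (w : V)
    (X L : Finset V) (hwX : ∀ x ∈ X, G.Adj w x) (hX : ∀ y ∈ X, ∀ z ∈ X, ¬ G.Adj y z)
    (hwL : w ∉ L) :
    ∃ Z : Finset V, Z.card ≤ 2 ^ (k + l) ∧
      ∀ y ∈ L, (∃ x ∈ X, G.Adj x y) → ¬ G.Adj w y → ∃ z ∈ Z, G.Adj z y := by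
  obtain ⟨Z, hZ, hdom, p, hp⟩ := exists_private G
    (L.filter fun y => (∃ x ∈ X, G.Adj x y) ∧ ¬ G.Adj w y) X
    (fun y hy => (Finset.mem_filter.mp hy).2.1)
  refine ⟨Z, ?_, fun y hy h1 h2 => hdom y (Finset.mem_filter.mpr ⟨hy, h1, h2⟩)⟩
  have hpm := fun z hz => Finset.mem_filter.mp (hp z hz).1
  by_contra! hlarge
  rcases exists_ramsey (fun x y => G.Adj (p x) (p y)) (fun _ _ h => h.symm) _ k l rfl Z
    hlarge.le with ⟨B, hB, hcard, hcl⟩ | ⟨B, hB, hcard, hcl⟩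
  · -- The private neighbours form the clique, and `B` is the set of pendant vertices.
    refine not_isEmpty_iff.mpr (nonempty_kstar G B hcard p id hcl
      (fun x hx y hy => ?_) (fun x hx y hy => hX _ (hZ (hB hx)) _ (hZ (hB hy)))) hK
    rw [SimpleGraph.adj_comm, eq_comm]
    exact (hp x (hB hx)).2 y (hB hy)
  · refine not_isEmpty_iff.mpr (nonempty_sstar G B hcard w p
      (fun y hy => hwX y (hZ (hB hy)))
      (fun y hy => (hpm y (hB hy)).2.2)
      (fun y hy h => hwL (h ▸ (hpm y (hB hy)).1))
      (fun x hx y hy => hX _ (hZ (hB hx)) _ (hZ (hB hy)))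
      (fun x hx y hy => (hp y (hB hy)).2 x (hB hx))
      (fun x hx y hy h => ?_)) hS
    exact hcl x hx y hy (fun h' => by rw [h'] at h; exact h.ne rfl) h

lemma exists_dominating_level {V : Type} [Fintype V] {G : SimpleGraph V} (hG : G.Connected)
    {k l : ℕ} (hK : IsEmpty (Kstar k ↪g G)) (hS : IsEmpty (Sstar l ↪g G)) (a : V) (i : ℕ) :
    ∃ D : Finset V, D.card ≤ indepBound k l i * (2 ^ (k + l) + 1) ∧
      ∀ y, G.dist a y = i + 1 → ∃ u ∈ D, u = y ∨ G.Adj u y := by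
  set L : Finset V := Finset.univ.filter fun y => G.dist a y = i + 1 with hL
  obtain ⟨X, hX, hmax⟩ := Finset.exists_max_image
    (L.powerset.filter fun X => ∀ y ∈ X, ∀ z ∈ X, ¬ G.Adj y z) Finset.card ⟨∅, by simp⟩
  simp only [Finset.mem_filter, Finset.mem_powerset] at hX hmax
  obtain ⟨hXL, hXind⟩ := hX
  -- A maximal independent set dominates the level.
  have hXdom : ∀ y ∈ L, y ∉ X → ∃ x ∈ X, G.Adj x y := by
    intro y hy hyX
    by_contra! hcon
    have := hmax (insert y X) ⟨Finset.insert_subset hy hXL, ?_⟩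
    · rw [Finset.card_insert_of_notMem hyX] at this
      omega
    · intro u hu v hv
      rcases Finset.mem_insert.mp hu with rfl | hu' <;>
        rcases Finset.mem_insert.mp hv with rfl | hv'
      · exact G.loopless.irrefl _
      · exact fun h => hcon v hv' h.symm
      · exact hcon u hu'
      · exact hXind u hu' v hv'
  obtain ⟨W, hWcard, hWd, hWdom⟩ := exists_dominating_indep hG hK hS a i X
    (fun y hy => by simpa [hL] using hXL hy) hXind
  have hloc : ∀ w : V, ∃ Z : Finset V, w ∈ W → Z.card ≤ 2 ^ (k + l) ∧
      ∀ y ∈ L, (∃ x ∈ X.filter (G.Adj w), G.Adj x y) → ¬ G.Adj w y → ∃ z ∈ Z, G.Adj z y := by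
    intro w
    by_cases hw : w ∈ W
    · obtain ⟨Z, hZ⟩ := exists_dominating_local hK hS w (X.filter (G.Adj w)) L
        (fun x hx => (Finset.mem_filter.mp hx).2)
        (fun y hy z hz => hXind y (Finset.mem_filter.mp hy).1 z (Finset.mem_filter.mp hz).1)
        (by simp [hL, hWd w hw])
      exact ⟨Z, fun _ => hZ⟩
    · exact ⟨∅, fun h => absurd h hw⟩
  choose Z hZ using hloc
  refine ⟨W.biUnion fun w => insert w (Z w), ?_, ?_⟩
  · refine (Finset.card_biUnion_le_card_mul _ _ (2 ^ (k + l) + 1) fun w hw => ?_).trans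
      (Nat.mul_le_mul_right _ hWcard)
    exact (Finset.card_insert_le _ _).trans (Nat.add_le_add_right (hZ w hw).1 1)
  · intro y hy
    have hyL : y ∈ L := by simp [hL, hy]
    by_cases hyX : y ∈ X
    · obtain ⟨w, hw, hadj⟩ := hWdom y hyX
      exact ⟨w, Finset.mem_biUnion.mpr ⟨w, hw, by simp⟩, Or.inr hadj⟩
    · obtain ⟨x, hx, hxy⟩ := hXdom y hyL hyX
      obtain ⟨w, hw, hwx⟩ := hWdom x hx
      by_cases hwy : G.Adj w y
      · exact ⟨w, Finset.mem_biUnion.mpr ⟨w, hw, by simp⟩, Or.inr hwy⟩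
      · obtain ⟨z, hz, hzy⟩ := (hZ w hw).2 y hyL ⟨x, Finset.mem_filter.mpr ⟨hx, hwx⟩, hxy⟩ hwy
        exact ⟨z, Finset.mem_biUnion.mpr ⟨w, hw, Finset.mem_insert_of_mem hz⟩, Or.inr hzy⟩

lemma HFree.isEmpty_embedding {𝓗 : Set FinGraph} {V W : Type} {G : SimpleGraph V}
    {F : SimpleGraph W} (h : HFree 𝓗 G) (hF : ∃ H ∈ 𝓗, Nonempty (H.2 ↪g F)) :
    IsEmpty (F ↪g G) := by
  obtain ⟨H, hH, ⟨e⟩⟩ := hF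
  exact ⟨fun f => (h H hH).false (f.comp e)⟩

end

/-- The "if" part of Theorem 1: if `𝓗 ≤ {K*_k, S*_ℓ, P_m}` then the domination number
of connected `𝓗`-free graphs is bounded by a constant depending only on `k`, `ℓ`, `m`. -/
theorem domNum_bounded_of_le :
    ∃ c : ℕ → ℕ → ℕ → ℕ,
      ∀ (k l m : ℕ), 0 < k → 0 < l → 0 < m →
      ∀ (𝓗 : Set FinGraph), (∀ H ∈ 𝓗, H.2.Connected) →
      (∃ H ∈ 𝓗, Nonempty (H.2 ↪g Kstar k)) →
      (∃ H ∈ 𝓗, Nonempty (H.2 ↪g Sstar l)) →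
      (∃ H ∈ 𝓗, Nonempty (H.2 ↪g pathGraph m)) →
      ∀ (V : Type) [Fintype V], ∀ G : SimpleGraph V,
        G.Connected → HFree 𝓗 G → domNum G ≤ c k l m := by
  classical
  refine ⟨fun k l m => 1 + ∑ i ∈ Finset.range m, indepBound k l i * (2 ^ (k + l) + 1), ?_⟩
  intro k l m _ _ _ 𝓗 _ hk hl hm V _ G hG hfree
  have hK := hfree.isEmpty_embedding hk
  have hS := hfree.isEmpty_embedding hl
  have hP := hfree.isEmpty_embedding hm
  obtain ⟨a⟩ := hG.nonempty
  choose D hDcard hD using exists_dominating_level hG hK hS a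
  let S : Finset V := insert a ((Finset.range m).biUnion D)
  have hScard : S.card ≤ 1 + ∑ i ∈ Finset.range m, indepBound k l i * (2 ^ (k + l) + 1) := by
    have h1 := Finset.card_insert_le a ((Finset.range m).biUnion D)
    have h2 := (Finset.card_biUnion_le (s := Finset.range m) (t := D)).trans
      (Finset.sum_le_sum fun i _ => hDcard i)
    change (insert a ((Finset.range m).biUnion D)).card ≤ _
    omega
  suffices hdom : Dominates G (S : Set V) Set.univ from
    le_trans (Nat.sInf_le (m := S.card) ⟨(S : Set V), Set.ncard_coe_finset S, hdom⟩) hScard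
  intro y _
  rcases hd : G.dist a y with _ | i
  · exact ⟨a, by simp [S], Or.inl (hG.dist_eq_zero_iff.mp hd)⟩
  · obtain ⟨u, hu, huy⟩ := hD i y hd
    have hlt := dist_lt_of_path_free hG hP a y
    exact ⟨u, Finset.mem_coe.mpr (Finset.mem_insert_of_mem
      (Finset.mem_biUnion.mpr ⟨i, Finset.mem_range.mpr (by omega), hu⟩)), huy⟩
end

section
/- Let k, ℓ and i be positive integers with i ≥ 2, let G be a {K*_k, S*_ℓ}-free graph, and let a be a vertex of G. Let X be a maximal independent subset of N^i_G(a), let U ⊆ N^{i−1}_G(a) be a set with |U| ≤ g_{k,ℓ}(i) that dominates X, and let X₀ be a minimal subset of X that dominates N^i_G(a) ∖ N[U]. Then |X₀| ≤ (R(k,ℓ) − 1)·g_{k,ℓ}(i). -/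
/-!
Every vertex of `X₀` has a neighbour in `U`, so if `|X₀| > (R(k,ℓ) - 1) |U|` some `u ∈ U` has at
least `R(k,ℓ)` neighbours in `X₀`. By minimality each `x ∈ X₀` has a private vertex `y x` in
`N^i_G(a) ∖ N[U]`: it is dominated by `x` and by no other vertex of `X₀`
(`exists_private_of_minimal`). Since `U` dominates `X`, no `y x` lies in `X`, so `y x` is
adjacent to `x`. Apply Ramsey's theorem to the private vertices of `R(k,ℓ)` neighbours of `u` in
`X₀`. A clique of size `k` among them, with the corresponding vertices of the independent set `X`
as pendants, induces `K*_k` (`kstarEmbedding`). An independent set of size `ℓ` among them, with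
the corresponding vertices of `X₀` as middle vertices and `u` as center, induces `S*_ℓ`
(`sstarEmbedding`).

The Ramsey number is encoded as an infimum of natural numbers, which is `0` for the empty set, so
finiteness of Ramsey numbers (`exists_ramsey_bound`) is also needed.
-/

open SimpleGraph Finset

/-- Ramsey's theorem for finite subsets of an arbitrary graph, with the recursive bound
`N(s+1,t+1) = N(s,t+1) + N(s+1,t) + 1`. -/
lemma exists_ramsey_bound (s t : ℕ) : ∃ N : ℕ, ∀ (V : Type) (G : SimpleGraph V) (W : Finset V),
    N ≤ W.card → (∃ A ⊆ W, G.IsNClique s A) ∨ (∃ B ⊆ W, Gᶜ.IsNClique t B) := by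
  classical
  induction s generalizing t with
  | zero => exact ⟨0, fun V G W _ => Or.inl ⟨∅, by simp, by simp [isNClique_iff]⟩⟩
  | succ s ihs =>
    induction t with
    | zero => exact ⟨0, fun V G W _ => Or.inr ⟨∅, by simp, by simp [isNClique_iff]⟩⟩
    | succ t iht =>
      obtain ⟨N₁, h₁⟩ := ihs (t + 1)
      obtain ⟨N₂, h₂⟩ := iht
      refine ⟨N₁ + N₂ + 1, fun V G W hW => ?_⟩
      obtain ⟨v, hv⟩ : W.Nonempty := Finset.card_pos.mp (by omega)
      have hsum := Finset.card_filter_add_card_filter_not (s := W.erase v) (fun w => G.Adj v w)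
      rw [Finset.card_erase_of_mem hv] at hsum
      have sub : ∀ {P : V → Prop} [DecidablePred P] {A : Finset V},
          A ⊆ (W.erase v).filter P → insert v A ⊆ W := by
        intro P _ A hA x hx
        rcases Finset.mem_insert.mp hx with rfl | hx
        · exact hv
        · exact Finset.mem_of_mem_erase (Finset.mem_filter.mp (hA hx)).1
      have sub' : ∀ {P : V → Prop} [DecidablePred P], (W.erase v).filter P ⊆ W := by
        intro P _ x hx
        exact Finset.mem_of_mem_erase (Finset.mem_filter.mp hx).1
      by_cases hc : N₁ ≤ ((W.erase v).filter (fun w => G.Adj v w)).card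
      · rcases h₁ V G _ hc with ⟨A, hA, hcl⟩ | ⟨B, hB, hcl⟩
        · exact Or.inl ⟨insert v A, sub hA,
            hcl.insert fun b hb => (Finset.mem_filter.mp (hA hb)).2⟩
        · exact Or.inr ⟨B, hB.trans sub', hcl⟩
      · rcases h₂ V G ((W.erase v).filter (fun w => ¬ G.Adj v w)) (by omega) with
          ⟨A, hA, hcl⟩ | ⟨B, hB, hcl⟩
        · exact Or.inl ⟨A, hA.trans sub', hcl⟩
        · refine Or.inr ⟨insert v B, sub hB, hcl.insert fun b hb => ?_⟩
          have := Finset.mem_filter.mp (hB hb)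
          exact (compl_adj _ _ _).mpr ⟨(Finset.ne_of_mem_erase this.1).symm, this.2⟩

lemma ramseyProp_ramsey (s t : ℕ) : RamseyProp (ramsey s t) s t := by
  have hne : {N | RamseyProp N s t}.Nonempty := by
    obtain ⟨N, h⟩ := exists_ramsey_bound s t
    refine ⟨N, fun G => ?_⟩
    rcases h _ G Finset.univ (by simp) with ⟨A, -, hA⟩ | ⟨B, -, hB⟩
    · exact Or.inl ⟨A, hA⟩
    · exact Or.inr ⟨B, hB⟩
  exact Nat.sInf_mem hne

/-- Ramsey's theorem for a family `y` of vertices indexed by a set with at least `R(s,t)`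
elements: the clique, resp. independent set, is returned as an injection into the index set. -/
lemma exists_ramsey_indices {V : Type} [Finite V] (G : SimpleGraph V) (s t : ℕ) (Z : Set V)
    (y : V → V) (hZ : ramsey s t ≤ Z.ncard) :
    (∃ p : Fin s → V, Function.Injective p ∧ (∀ i, p i ∈ Z) ∧
      ∀ i j, i ≠ j → G.Adj (y (p i)) (y (p j))) ∨
    (∃ p : Fin t → V, Function.Injective p ∧ (∀ i, p i ∈ Z) ∧
      ∀ i j, ¬ G.Adj (y (p i)) (y (p j))) := by
  classical
  have := Fintype.ofFinite Z
  obtain ⟨f⟩ : Nonempty (Fin (ramsey s t) ↪ Z) := by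
    apply Function.Embedding.nonempty_of_card_le
    rwa [Fintype.card_fin, ← Nat.card_eq_fintype_card]
  rcases ramseyProp_ramsey s t (G.comap fun n => y (f n)) with ⟨A, hA⟩ | ⟨A, hA⟩
  · refine Or.inl ⟨fun i => f (A.orderEmbOfFin hA.card_eq i), ?_, fun i => (f _).2, ?_⟩
    · exact Subtype.val_injective.comp (f.injective.comp (A.orderEmbOfFin hA.card_eq).injective)
    · intro i j hij
      exact hA.isClique (A.orderEmbOfFin_mem hA.card_eq i) (A.orderEmbOfFin_mem hA.card_eq j)
        ((A.orderEmbOfFin hA.card_eq).injective.ne hij)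
  · refine Or.inr ⟨fun i => f (A.orderEmbOfFin hA.card_eq i), ?_, fun i => (f _).2, ?_⟩
    · exact Subtype.val_injective.comp (f.injective.comp (A.orderEmbOfFin hA.card_eq).injective)
    · intro i j
      rcases eq_or_ne i j with rfl | hij
      · exact G.loopless.irrefl _
      · exact ((compl_adj _ _ _).mp (hA.isClique (A.orderEmbOfFin_mem hA.card_eq i)
          (A.orderEmbOfFin_mem hA.card_eq j)
          ((A.orderEmbOfFin hA.card_eq).injective.ne hij))).2

/-- A clique `c` with pendant vertices `d` induces `K*_n`. -/
def kstarEmbedding {V : Type} (G : SimpleGraph V) {n : ℕ} (c d : Fin n → V)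
    (hd : Function.Injective d) (hcd : ∀ i j, c i ≠ d j)
    (hcc : ∀ i j, i ≠ j → G.Adj (c i) (c j)) (hadj : ∀ i j, G.Adj (c i) (d j) ↔ i = j)
    (hdd : ∀ i j, ¬ G.Adj (d i) (d j)) : Kstar n ↪g G where
  toFun := Sum.elim c d
  inj' := by
    rintro (i | i) (j | j) h
    · by_contra hne
      exact (hcc i j fun e => hne (e ▸ rfl)).ne h
    · exact absurd h (hcd i j)
    · exact absurd h.symm (hcd j i)
    · exact congrArg _ (hd h)
  map_rel_iff' := by
    intro x y
    change G.Adj (Sum.elim c d x) (Sum.elim c d y) ↔ _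
    revert x y
    rintro (i | i) (j | j)
    · have : G.Adj (c i) (c j) ↔ i ≠ j := ⟨fun h e => G.loopless.irrefl _ (e ▸ h), hcc i j⟩
      simp [Kstar, this]
    · simp [Kstar, hadj]
    · simp [Kstar, G.adj_comm (d i), hadj]
    · simp [Kstar, hdd]

/-- A center `u` with middle vertices `c` and end vertices `d` induces `S*_n`. -/
def sstarEmbedding {V : Type} (G : SimpleGraph V) {n : ℕ} (u : V) (c d : Fin n → V)
    (hc : Function.Injective c) (hd : Function.Injective d) (hcd : ∀ i j, c i ≠ d j)
    (hud : ∀ i, u ≠ d i)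
    (huc : ∀ i, G.Adj u (c i)) (hud' : ∀ i, ¬ G.Adj u (d i))
    (hadj : ∀ i j, G.Adj (c i) (d j) ↔ i = j)
    (hcc : ∀ i j, ¬ G.Adj (c i) (c j)) (hdd : ∀ i j, ¬ G.Adj (d i) (d j)) : Sstar n ↪g G where
  toFun := fun o => o.elim u (Sum.elim c d)
  inj' := by
    rintro (_ | i | i) (_ | j | j) h
    · rfl
    · exact absurd h (huc j).ne
    · exact absurd h (hud j)
    · exact absurd h.symm (huc i).ne
    · exact congrArg (fun i => some (Sum.inl i)) (hc h)
    · exact absurd h (hcd i j)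
    · exact absurd h.symm (hud i)
    · exact absurd h.symm (hcd j i)
    · exact congrArg (fun i => some (Sum.inr i)) (hd h)
  map_rel_iff' := by
    intro x y
    change G.Adj (Option.elim x u (Sum.elim c d)) (Option.elim y u (Sum.elim c d)) ↔ _
    revert x y
    rintro (_ | i | i) (_ | j | j)
    · simp [Sstar]
    · simp [Sstar, huc]
    · simp [Sstar, hud']
    · simp [Sstar, (huc i).symm]
    · simp [Sstar, hcc]
    · simp [Sstar, hadj]
    · simp [Sstar, G.adj_comm (d i), hud']
    · simp [Sstar, G.adj_comm (d i), hadj]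
    · simp [Sstar, hdd]

/-- Each vertex of a minimal dominating set has a private vertex. -/
lemma exists_private_of_minimal {V : Type} (G : SimpleGraph V) (X₀ Y : Set V)
    (hdom : Dominates G X₀ Y) (hmin : ∀ S ⊂ X₀, ¬ Dominates G S Y) (x : V) (hx : x ∈ X₀) :
    ∃ y ∈ Y, (x = y ∨ G.Adj x y) ∧ ∀ z ∈ X₀, z ≠ x → z ≠ y ∧ ¬ G.Adj z y := by
  have h := hmin (X₀ \ {x}) (Set.sdiff_singleton_ssubset.mpr hx)
  simp only [Dominates, not_forall, not_exists, not_and, not_or] at h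
  obtain ⟨y, hy, h⟩ := h
  have hpriv : ∀ z ∈ X₀, z ≠ x → z ≠ y ∧ ¬ G.Adj z y := fun z hz hzx => h z ⟨hz, hzx⟩
  obtain ⟨z, hz, hzy⟩ := hdom y hy
  refine ⟨y, hy, ?_, hpriv⟩
  rcases eq_or_ne z x with rfl | hne
  · exact hzy
  · have := hpriv z hz hne
    tauto

/-- Pigeonhole: a set covered by the neighborhoods of `U`, each meeting it in at most `m`
vertices, has at most `m * |U|` elements. -/
lemma ncard_le_of_forall_neighbors {V : Type} [Finite V] (G : SimpleGraph V) (X₀ U : Set V)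
    (m : ℕ) (hcov : ∀ x ∈ X₀, ∃ u ∈ U, G.Adj u x)
    (hm : ∀ u ∈ U, {x | x ∈ X₀ ∧ G.Adj u x}.ncard ≤ m) : X₀.ncard ≤ m * U.ncard := by
  classical
  have := Fintype.ofFinite V
  have hsub : X₀.toFinset ⊆ U.toFinset.biUnion fun u => {x | x ∈ X₀ ∧ G.Adj u x}.toFinset := by
    intro x hx
    obtain ⟨u, hu, hux⟩ := hcov x (by simpa using hx)
    simp only [Finset.mem_biUnion, Set.mem_toFinset, Set.mem_ofPred_eq]
    exact ⟨u, hu, by simpa using hx, hux⟩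
  have h := (Finset.card_le_card hsub).trans
    (Finset.card_biUnion_le_card_mul _ _ m fun u hu => by
      rw [← Set.ncard_eq_toFinset_card']
      exact hm u (by simpa using hu))
  rw [← Set.ncard_eq_toFinset_card', ← Set.ncard_eq_toFinset_card'] at h
  rwa [mul_comm]

/-- **Claim 1 in Lemma 2.** With `X` a maximal independent subset of `N^i_G(a)`,
`U ⊆ N^{i-1}_G(a)` a set of at most `g_{k,ℓ}(i)` vertices dominating `X`, and `X₀` a
minimal subset of `X` dominating `N^i_G(a) ∖ N[U]`, we have `|X₀| ≤ (R(k,ℓ)-1)g_{k,ℓ}(i)`. -/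
theorem card_min_dominating_le (k l i : ℕ) (hk : 0 < k) (hl : 0 < l) (hi : 2 ≤ i)
    (V : Type) [Fintype V] (G : SimpleGraph V)
    (hK : IsEmpty (Kstar k ↪g G)) (hS : IsEmpty (Sstar l ↪g G)) (a : V)
    (X : Set V) (hXsub : X ⊆ sphere G a i) (hXind : Indep G X)
    (hXmax : ∀ X' : Set V, X ⊆ X' → X' ⊆ sphere G a i → Indep G X' → X' = X)
    (U : Set V) (hUsub : U ⊆ sphere G a (i - 1)) (hUcard : U.ncard ≤ gfun k l i)
    (hUdom : Dominates G U X)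
    (X₀ : Set V) (hX₀sub : X₀ ⊆ X)
    (hX₀dom : Dominates G X₀ (sphere G a i \ {v | ∃ u ∈ U, u = v ∨ G.Adj u v}))
    (hX₀min : ∀ S ⊂ X₀, ¬ Dominates G S (sphere G a i \ {v | ∃ u ∈ U, u = v ∨ G.Adj u v})) :
    X₀.ncard ≤ (ramsey k l - 1) * gfun k l i := by
  have hcov : ∀ x ∈ X, ∃ u ∈ U, G.Adj u x := by
    intro x hx
    obtain ⟨u, hu, rfl | h⟩ := hUdom x hx
    · have h1 := (hUsub hu).2
      have h2 := (hXsub hx).2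
      omega
    · exact ⟨u, hu, h⟩
  refine (ncard_le_of_forall_neighbors G X₀ U (ramsey k l - 1)
    (fun x hx => hcov x (hX₀sub hx)) fun u hu => ?_).trans (Nat.mul_le_mul_left _ hUcard)
  by_contra hbig
  choose! y hyY hxy hpriv using exists_private_of_minimal G X₀ _ hX₀dom hX₀min
  have hyN : ∀ x ∈ X₀, ∀ w ∈ U, w ≠ y x ∧ ¬ G.Adj w (y x) := by
    intro x hx w hw
    have := (hyY x hx).2
    simp only [Set.mem_ofPred_eq, not_exists, not_and, not_or] at this
    exact this w hw
  have hyX : ∀ x ∈ X₀, ∀ z ∈ X, y x ≠ z := by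
    rintro x hx z hz rfl
    obtain ⟨w, hw, h⟩ := hcov _ hz
    exact (hyN x hx w hw).2 h
  have hadj : ∀ x ∈ X₀, ∀ z ∈ X₀, (G.Adj x (y z) ↔ x = z) := by
    intro x hx z hz
    constructor
    · intro h
      by_contra hne
      exact (hpriv z hz x hx hne).2 h
    · rintro rfl
      exact (hxy x hx).resolve_left (hyX x hx x (hX₀sub hx)).symm
  have hyinj : ∀ x ∈ X₀, ∀ z ∈ X₀, y x = y z → x = z := by
    intro x hx z hz h
    rw [← hadj x hx z hz, ← h, hadj x hx x hx]
  have hind : ∀ x ∈ X₀, ∀ z ∈ X₀, ¬ G.Adj x z := fun x hx z hz h =>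
    hXind x (hX₀sub hx) z (hX₀sub hz) h.ne h
  rcases exists_ramsey_indices G k l {x | x ∈ X₀ ∧ G.Adj u x} y (by omega) with
    ⟨p, hp, hpZ, hcl⟩ | ⟨p, hp, hpZ, hcl⟩
  · refine hK.false (kstarEmbedding G (fun i => y (p i)) p hp
      (fun i j => hyX _ (hpZ i).1 _ (hX₀sub (hpZ j).1)) hcl (fun i j => ?_)
      fun i j => hind _ (hpZ i).1 _ (hpZ j).1)
    rw [G.adj_comm, hadj _ (hpZ j).1 _ (hpZ i).1, hp.eq_iff, eq_comm]
  · exact hS.false (sstarEmbedding G u p (fun i => y (p i)) hp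
      (fun i j h => hp (hyinj _ (hpZ i).1 _ (hpZ j).1 h))
      (fun i j => (hyX _ (hpZ j).1 _ (hX₀sub (hpZ i).1)).symm)
      (fun i => (hyN _ (hpZ i).1 u hu).1) (fun i => (hpZ i).2)
      (fun i => (hyN _ (hpZ i).1 u hu).2)
      (fun i j => by rw [hadj _ (hpZ i).1 _ (hpZ j).1, hp.eq_iff])
      (fun i j => hind _ (hpZ i).1 _ (hpZ j).1) hcl)
end
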